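/- Let (λ_n)_{n≥1} be positive real numbers satisfying the doubling condition (there exists C > 1 such that C⁻¹ λ_n ≤ λ_k ≤ C λ_n whenever n ≥ 1 and n ≤ k ≤ 2n) and with λ_n ≥ 1 for all n. Then there exists M₀ > 1 (depending only on (λ_n)) such that the following holds for every integer N > 100·M₀ and every constant c > 0: if f is an infinitely differentiable real-valued function on 𝕋, and for each ε ∈ (0,1), ψ_ε : 𝕋 → ℝ is an integrable function satisfying ψ̂_ε(0) = 1, |ψ̂_ε(n)| ≤ min(ε, c·ε^{1−N}|n|^{−N}) for all n ≠ 0, and Σ_{n≠0} |ψ̂_ε(n)|² λ_{|n|} ≤ ε², then Σ_{n∈ℤ} |(f·ψ_ε)^{\wedge}(n) − f̂(n)|² λ_{|n|} → 0 as ε → 0⁺. -/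

import Mathlib

open MeasureTheory Filter Topology

noncomputable section

/-- Normalized Haar (arc-length) probability measure on the circle `𝕋 = ℝ/ℤ`. -/
def hm : Measure UnitAddCircle := AddCircle.haarAddCircle

/-- Fourier coefficients of a real-valued function on the circle. -/
def fc (f : UnitAddCircle → ℝ) (n : ℤ) : ℂ := fourierCoeff (fun x => (f x : ℂ)) n

lemma aux_doubling (lam : ℕ → ℝ) (hlam : ∀ n, 1 ≤ lam n) (C : ℝ) (hC : 1 < C)
    (h : ∀ n k : ℕ, 1 ≤ n → n ≤ k → k ≤ 2 * n →
      C⁻¹ * lam n ≤ lam k ∧ lam k ≤ C * lam n) (j : ℕ) :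
    ∀ x y : ℕ, 1 ≤ x → x ≤ y → y ≤ 2 ^ j * x →
      lam x ≤ C ^ j * lam y ∧ lam y ≤ C ^ j * lam x := by
  have hC0 : 0 < C := by linarith
  have h' : ∀ n k : ℕ, 1 ≤ n → n ≤ k → k ≤ 2 * n →
      lam n ≤ C * lam k ∧ lam k ≤ C * lam n := by
    intro n k h1 h2 h3
    obtain ⟨ha, hb⟩ := h n k h1 h2 h3
    refine ⟨?_, hb⟩
    rwa [inv_mul_le_iff₀ hC0] at ha
  induction j with
  | zero =>
    intro x y hx hxy hy
    have : x = y := by omega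
    subst this; simp
  | succ j ih =>
    intro x y hx hxy hy
    have hpow : 1 ≤ C ^ j := one_le_pow₀ hC.le
    by_cases hm : y ≤ 2 * x
    · obtain ⟨h1, h2⟩ := h' x y hx hxy hm
      have hle : C ≤ C ^ (j+1) := by rw [pow_succ]; nlinarith
      have := hlam x
      have := hlam y
      constructor
      · exact h1.trans (mul_le_mul_of_nonneg_right hle (by linarith))
      · exact h2.trans (mul_le_mul_of_nonneg_right hle (by linarith))
    · have hy' : y ≤ 2 * (2 ^ j * x) := by rw [pow_succ] at hy; linarith
      obtain ⟨h1, h2⟩ := ih x ((y+1)/2) hx (by omega) (by omega)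
      obtain ⟨h3, h4⟩ := h' ((y+1)/2) y (by omega) (by omega) (by omega)
      constructor
      · calc lam x ≤ C ^ j * lam ((y+1)/2) := h1
          _ ≤ C ^ j * (C * lam y) := by gcongr
          _ = _ := by ring
      · calc lam y ≤ C * lam ((y+1)/2) := h4
          _ ≤ C * (C ^ j * lam x) := by gcongr
          _ = _ := by ring

lemma aux_peetre (lam : ℕ → ℝ) (hlam : ∀ n, 1 ≤ lam n)
    (hdbl : ∃ C : ℝ, 1 < C ∧ ∀ n k : ℕ, 1 ≤ n → n ≤ k → k ≤ 2 * n →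
      C⁻¹ * lam n ≤ lam k ∧ lam k ≤ C * lam n) :
    ∃ (A : ℕ) (K : ℝ), 0 ≤ K ∧ ∀ n k : ℤ, k ≠ 0 →
      lam n.natAbs ≤ K * (1 + ((n - k).natAbs : ℝ)) ^ A * lam k.natAbs := by
  obtain ⟨C, hC, h⟩ := hdbl
  obtain ⟨A, hA⟩ := pow_unbounded_of_one_lt C (one_lt_two)
  refine ⟨A, 2 ^ A * lam 0, by have := hlam 0; positivity, ?_⟩
  intro n k hk
  set d := (n - k).natAbs with hd
  have h0 := hlam 0
  have hk1 := hlam k.natAbs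
  by_cases hn : n = 0
  · subst hn
    simp only [Int.natAbs_zero]
    have h2 : (1:ℝ) ≤ 2 ^ A := one_le_pow₀ (by norm_num)
    have h3 : (1:ℝ) ≤ (1 + (d:ℝ)) ^ A := one_le_pow₀ (by simp)
    have h4 : 1 ≤ 2 ^ A * (1 + (d:ℝ)) ^ A * lam k.natAbs :=
      one_le_mul_of_one_le_of_one_le (one_le_mul_of_one_le_of_one_le h2 h3) hk1
    nlinarith
  · set j := Nat.log 2 (1 + d) + 1 with hj
    have hj1 : 1 + d < 2 ^ j := Nat.lt_pow_succ_log_self (by norm_num) _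
    have hj2 : 2 ^ j ≤ 2 * (1 + d) := by
      rw [hj, pow_succ]
      have := Nat.pow_log_le_self 2 (x := 1 + d) (by omega)
      omega
    have key : lam n.natAbs ≤ C ^ j * lam k.natAbs := by
      rcases le_total n.natAbs k.natAbs with hle | hle
      · refine (aux_doubling lam hlam C hC h j _ _ (by omega) hle ?_).1
        have : k.natAbs ≤ (1 + d) * n.natAbs := by
          have : 1 ≤ n.natAbs := by omega
          have : k.natAbs ≤ d + n.natAbs := by omega
          nlinarith
        exact this.trans (Nat.mul_le_mul_right _ hj1.le)
      · refine (aux_doubling lam hlam C hC h j _ _ (by omega) hle ?_).2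
        have : n.natAbs ≤ (1 + d) * k.natAbs := by
          have : 1 ≤ k.natAbs := by omega
          have : n.natAbs ≤ d + k.natAbs := by omega
          nlinarith
        exact this.trans (Nat.mul_le_mul_right _ hj1.le)
    have hCj : C ^ j ≤ 2 ^ A * (1 + (d:ℝ)) ^ A := by
      calc C ^ j ≤ (2 ^ A) ^ j := by gcongr
        _ = (2 ^ j) ^ A := by rw [← pow_mul, ← pow_mul, mul_comm]
        _ ≤ (2 * (1 + (d:ℝ))) ^ A := by
            gcongr
            exact_mod_cast hj2
        _ = _ := by rw [mul_pow]
    have hpos : 0 ≤ 2 ^ A * (1 + (d:ℝ)) ^ A := by positivity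
    calc lam n.natAbs ≤ C ^ j * lam k.natAbs := key
      _ ≤ (2 ^ A * (1 + (d:ℝ)) ^ A) * lam k.natAbs := by gcongr
      _ ≤ (2 ^ A * (1 + (d:ℝ)) ^ A) * lam k.natAbs * lam 0 :=
        le_mul_of_one_le_right (by positivity) h0
      _ = _ := by ring

lemma aux_decay (hab : (0:ℝ) < 0 + 1) (p : ℕ) : ∀ F : ℝ → ℂ, ContDiff ℝ (⊤ : ℕ∞) F →
    Function.Periodic F 1 → ∃ K : ℝ, 0 ≤ K ∧
      ∀ n : ℤ, |(n : ℝ)| ^ p * ‖fourierCoeffOn hab F n‖ ≤ K := by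
  induction p with
  | zero =>
    intro F hF _
    obtain ⟨K, hK⟩ := (isCompact_Icc (a := (0:ℝ)) (b := 1)).exists_bound_of_continuousOn
      hF.continuous.continuousOn
    refine ⟨max K 0, le_max_right _ _, fun n => ?_⟩
    rw [pow_zero, one_mul, fourierCoeffOn_eq_integral]
    have : ‖∫ x in (0:ℝ)..(0+1), fourier (-n) (x : AddCircle ((0:ℝ)+1-0)) • F x‖
        ≤ (max K 0) * |0 + 1 - 0| := by
      apply intervalIntegral.norm_integral_le_of_norm_le_const
      intro x hx
      rw [Set.uIoc_of_le hab.le] at hx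
      rw [norm_smul, fourier_apply, Circle.norm_coe, one_mul]
      exact (hK x ⟨hx.1.le, by linarith [hx.2]⟩).trans (le_max_left _ _)
    simpa using this
  | succ p ih =>
    intro F hF hper
    have hdF : ContDiff ℝ (⊤ : ℕ∞) (deriv F) := ((contDiff_infty_iff_deriv).1 hF).2
    have hdper : Function.Periodic (deriv F) 1 := by
      intro x
      rw [← deriv_comp_add_const]
      congr 1
      funext y; exact hper y
    obtain ⟨K, hK0, hK⟩ := ih (deriv F) hdF hdper
    refine ⟨K, hK0, fun n => ?_⟩
    by_cases hn : n = 0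
    · subst hn; simpa using hK0
    have hdiff : Differentiable ℝ F := ((contDiff_infty_iff_deriv).1 hF).1
    rw [fourierCoeffOn_of_hasDerivAt hab hn (f' := deriv F)
      (fun x _ => (hdiff x).hasDerivAt) (hdF.continuous.intervalIntegrable _ _)]
    have h1 : F (0 + 1) = F 0 := hper 0
    have hn' : 0 < |(n:ℝ)| := by positivity
    rw [h1]
    simp only [sub_self, mul_zero, zero_sub, norm_mul, norm_neg, norm_div, norm_one]
    have e1 : ‖(2:ℂ)‖ = 2 := by simp
    have e2 : ‖(Real.pi : ℂ)‖ = Real.pi := by simp [abs_of_pos Real.pi_pos]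
    have e3 : ‖(n:ℂ)‖ = |(n:ℝ)| := by simp
    have e4 : ‖(((0:ℝ)+1 : ℝ) : ℂ) - ((0:ℝ):ℂ)‖ = 1 := by simp
    rw [e1, e2, e3, e4, Complex.norm_I]
    have hpi := Real.pi_gt_three
    calc |(n:ℝ)| ^ (p+1) * (1 / (2 * Real.pi * 1 * |(n:ℝ)|) * (1 * ‖fourierCoeffOn hab (deriv F) n‖))
        = (|(n:ℝ)| ^ p * ‖fourierCoeffOn hab (deriv F) n‖) * (1 / (2 * Real.pi)) := by
          field_simp
          ring
      _ ≤ (|(n:ℝ)| ^ p * ‖fourierCoeffOn hab (deriv F) n‖) * 1 := by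
          gcongr
          rw [div_le_one (by positivity)]; linarith
      _ ≤ K := by rw [mul_one]; exact hK n

lemma aux_summable (f : UnitAddCircle → ℝ)
    (hf : ContDiff ℝ (⊤ : ℕ∞) (fun t : ℝ => f (t : UnitAddCircle))) (A : ℕ) :
    Summable (fun m : ℤ => ‖fc f m‖ * (1 + (m.natAbs : ℝ)) ^ A) := by
  have hab : (0:ℝ) < 0 + 1 := by norm_num
  have hper : Function.Periodic (fun t : ℝ => ((f (t : UnitAddCircle) : ℝ) : ℂ)) 1 := by
    intro x
    have : ((x + 1 : ℝ) : UnitAddCircle) = (x : UnitAddCircle) := AddCircle.coe_add_period 1 x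
    simp only [this]
  have hF : ContDiff ℝ (⊤ : ℕ∞) (fun t : ℝ => ((f (t : UnitAddCircle) : ℝ) : ℂ)) :=
    Complex.ofRealCLM.contDiff.comp hf
  obtain ⟨K, hK0, hK⟩ := aux_decay hab (A + 2) _ hF hper
  have heq : ∀ m, fc f m =
      fourierCoeffOn hab (fun t : ℝ => ((f (t : UnitAddCircle) : ℝ) : ℂ)) m := by
    intro m
    unfold fc
    rw [fourierCoeffOn_eq_integral, fourierCoeff_eq_intervalIntegral _ _ 0]
    norm_num
  refine Summable.of_norm_bounded_eventually
    (g := fun m : ℤ => K * 2 ^ A * (1 / (m:ℝ) ^ 2))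
    ((Real.summable_one_div_int_pow.2 (by norm_num)).mul_left _) ?_
  have : ∀ᶠ m : ℤ in cofinite, m ≠ 0 := by
    rw [Filter.eventually_cofinite]
    simp only [ne_eq, not_not]
    exact Set.finite_singleton (0:ℤ)
  filter_upwards [this] with m hm
  have h1 := hK m
  rw [← heq] at h1
  have e : (m.natAbs : ℝ) = |(m:ℝ)| := by rw [Nat.cast_natAbs]; simp
  rw [e, norm_mul, norm_norm, Real.norm_of_nonneg (by positivity)]
  have hm1 : (1:ℝ) ≤ |(m:ℝ)| := by exact_mod_cast Int.one_le_abs hm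
  have hsq : (m:ℝ)^2 = |(m:ℝ)|^2 := (sq_abs _).symm
  rw [hsq, mul_one_div, le_div_iff₀ (by positivity)]
  calc ‖fc f m‖ * (1 + |(m:ℝ)|) ^ A * |(m:ℝ)| ^ 2
      ≤ ‖fc f m‖ * (2 * |(m:ℝ)|) ^ A * |(m:ℝ)| ^ 2 := by gcongr; linarith
    _ = (|(m:ℝ)| ^ (A+2) * ‖fc f m‖) * 2 ^ A := by ring
    _ ≤ K * 2 ^ A := by gcongr

lemma aux_conv (f g : UnitAddCircle → ℝ)
    (hf : ContDiff ℝ (⊤ : ℕ∞) (fun t : ℝ => f (t : UnitAddCircle)))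
    (hs : Summable (fun m : ℤ => ‖fc f m‖)) (hg : Integrable g hm) (n : ℤ) :
    HasSum (fun m : ℤ => fc f m * fc g (n - m)) (fc (fun x => f x * g x) n) := by
  have hcont : Continuous f := by
    have : Continuous (f ∘ (QuotientAddGroup.mk : ℝ → UnitAddCircle)) := hf.continuous
    exact (isQuotientMap_quot_mk.continuous_iff).2 this
  let fC : C(UnitAddCircle, ℂ) := ⟨fun x => (f x : ℂ), by fun_prop⟩
  have hsum : Summable (fourierCoeff fC) := Summable.of_norm hs
  have hg' : Integrable (fun x => (g x : ℂ)) AddCircle.haarAddCircle := hg.ofReal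
  have key := hasSum_integral_of_summable_integral_norm (μ := AddCircle.haarAddCircle)
    (F := fun (m : ℤ) (x : UnitAddCircle) =>
      fc f m * (fourier (-(n - m)) x • (g x : ℂ))) (fun m => (hg'.fourier_smul _).const_mul _) ?_
  · have e1 : ∀ m, ∫ x : UnitAddCircle, fc f m * (fourier (-(n - m)) x • (g x : ℂ))
        ∂AddCircle.haarAddCircle = fc f m * fc g (n - m) := by
      intro m
      rw [integral_const_mul]; rfl
    have e2 : ∫ x : UnitAddCircle, ∑' m : ℤ, fc f m * (fourier (-(n - m)) x • (g x : ℂ))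
        ∂AddCircle.haarAddCircle = fc (fun x => f x * g x) n := by
      unfold fc fourierCoeff
      congr 1
      funext x
      have h := (has_pointwise_sum_fourier_series_of_summable hsum x).mul_right
        (fourier (-n) x * (g x : ℂ))
      have h' : (fun m : ℤ => fc f m * (fourier (-(n - m)) x • (g x : ℂ))) =
          fun m : ℤ => fourierCoeff fC m • fourier m x * (fourier (-n) x * (g x : ℂ)) := by
        funext m
        have : -(n - m) = m + -n := by ring
        rw [this, fourier_add]
        simp only [smul_eq_mul]
        change _ = fc f m * _ * _
        ring
      change ∑' m : ℤ, fc f m * (fourier (-(n - m)) x • (g x : ℂ)) = _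
      rw [h', h.tsum_eq]
      simp only [smul_eq_mul, Complex.ofReal_mul]
      change (f x : ℂ) * _ = _
      ring
    simp_rw [e1] at key
    rwa [e2] at key
  · have : ∀ m : ℤ, ∫ x : UnitAddCircle, ‖fc f m * (fourier (-(n - m)) x • (g x : ℂ))‖
        ∂AddCircle.haarAddCircle =
        ‖fc f m‖ * ∫ x : UnitAddCircle, ‖(g x : ℂ)‖ ∂AddCircle.haarAddCircle := by
      intro m
      rw [← integral_const_mul]
      congr 1
      funext x
      rw [norm_mul, norm_smul, fourier_apply, Circle.norm_coe, one_mul]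
    simp_rw [this]
    exact hs.mul_right _

open scoped ENNReal in
lemma aux_cs (a b : ℤ → ℝ≥0∞) :
    (∑' k, a k * b k) ^ 2 ≤ (∑' k, a k) * ∑' k, a k * b k ^ 2 := by
  have hexp : (∑' k, a k * b k) ^ 2 = ∑' k, ∑' l, a k * a l * (b k * b l) := by
    rw [sq, ← ENNReal.tsum_mul_right]
    congr 1; funext k
    rw [← ENNReal.tsum_mul_left]
    congr 1; funext l
    ring
  have e1 : (∑' k, a k) * ∑' k, a k * b k ^ 2 = ∑' k, ∑' l, a k * a l * b l ^ 2 := by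
    rw [← ENNReal.tsum_mul_right]
    congr 1; funext k
    rw [← ENNReal.tsum_mul_left]
    congr 1; funext l
    ring
  have e2 : (∑' k, a k) * ∑' k, a k * b k ^ 2 = ∑' k, ∑' l, a k * a l * b k ^ 2 := by
    rw [e1, ENNReal.tsum_comm]
    congr 1; funext k
    congr 1; funext l
    ring
  have h2 : 2 * (∑' k, a k * b k) ^ 2 ≤ 2 * ((∑' k, a k) * ∑' k, a k * b k ^ 2) := by
    nth_rewrite 2 [two_mul]
    nth_rewrite 1 [e1]
    rw [e2, hexp, ← ENNReal.tsum_mul_left, ← ENNReal.tsum_add]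
    refine ENNReal.tsum_le_tsum fun k => ?_
    rw [← ENNReal.tsum_mul_left, ← ENNReal.tsum_add]
    refine ENNReal.tsum_le_tsum fun l => ?_
    have : 2 * b k * b l ≤ b k ^ 2 + b l ^ 2 := by
      rcases le_total (b k) (b l) with h | h
      · obtain ⟨c, hc⟩ := le_iff_exists_add.1 h
        rw [hc]
        calc 2 * b k * (b k + c) ≤ 2 * b k * (b k + c) + c ^ 2 := le_self_add
          _ = _ := by ring
      · obtain ⟨c, hc⟩ := le_iff_exists_add.1 h
        rw [hc]
        calc 2 * (b l + c) * b l ≤ 2 * (b l + c) * b l + c ^ 2 := le_self_add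
          _ = _ := by ring
    calc 2 * (a k * a l * (b k * b l)) = a k * a l * (2 * b k * b l) := by ring
      _ ≤ a k * a l * (b k ^ 2 + b l ^ 2) := by gcongr
      _ = _ := by ring
  exact (ENNReal.mul_le_mul_iff_right (by norm_num) (by norm_num)).1 h2

open scoped ENNReal in
lemma aux_young (a b w v : ℤ → ℝ≥0∞) (hb : b 0 = 0)
    (hw : ∀ n k : ℤ, k ≠ 0 → w n ≤ v (n - k) * w k) :
    ∑' n, (∑' k, a (n - k) * b k) ^ 2 * w n ≤
      (∑' m, a m) * (∑' m, a m * v m) * ∑' k, b k ^ 2 * w k := by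
  calc ∑' n, (∑' k, a (n - k) * b k) ^ 2 * w n
      ≤ ∑' n, ((∑' m, a m) * ∑' k, a (n - k) * b k ^ 2) * w n := by
        refine ENNReal.tsum_le_tsum fun n => ?_
        gcongr
        have := aux_cs (fun k => a (n - k)) b
        have e : ∑' k, a (n - k) = ∑' m, a m := (Equiv.subLeft n).tsum_eq a
        rwa [e] at this
    _ = (∑' m, a m) * ∑' n, ∑' k, a (n - k) * b k ^ 2 * w n := by
        rw [← ENNReal.tsum_mul_left]
        congr 1; funext n
        rw [mul_assoc, ENNReal.tsum_mul_right]
    _ ≤ (∑' m, a m) * ∑' n, ∑' k, (a (n - k) * v (n - k)) * (b k ^ 2 * w k) := by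
        refine mul_le_mul_right (ENNReal.tsum_le_tsum fun n => ENNReal.tsum_le_tsum fun k => ?_) _
        by_cases hk : k = 0
        · subst hk; simp [hb]
        · calc a (n - k) * b k ^ 2 * w n ≤ a (n - k) * b k ^ 2 * (v (n - k) * w k) := by
                gcongr; exact hw n k hk
            _ = _ := by ring
    _ = _ := by
        rw [ENNReal.tsum_comm, mul_assoc]
        congr 1
        rw [← ENNReal.tsum_mul_left]
        congr 1; funext k
        have e : ∑' n, a (n - k) * v (n - k) = ∑' m, a m * v m :=
          (Equiv.subRight k).tsum_eq (fun m => a m * v m)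
        rw [ENNReal.tsum_mul_right, e]

/-- with `(λ_n)` doubling and `λ_n ≥ 1`, there is `M₀ > 1` such that for any
integer `N > 100·M₀` and constant `c > 0`: if `f` is `C^∞` on `𝕋` and for each
`ε ∈ (0,1)` the integrable function `ψ_ε` satisfies `ψ̂_ε(0) = 1`,
`|ψ̂_ε(n)| ≤ min(ε, c ε^{1-N} |n|^{-N})` for `n ≠ 0`, and
`Σ_{n ≠ 0} |ψ̂_ε(n)|² λ_{|n|} ≤ ε²`, then
`Σ_{n ∈ ℤ} |(f·ψ_ε)^∧(n) − f̂(n)|² λ_{|n|} → 0` as `ε → 0⁺`. -/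
theorem statement17 (lam : ℕ → ℝ) (hlam : ∀ n, 1 ≤ lam n)
    (hdbl : ∃ C : ℝ, 1 < C ∧ ∀ n k : ℕ, 1 ≤ n → n ≤ k → k ≤ 2 * n →
      C⁻¹ * lam n ≤ lam k ∧ lam k ≤ C * lam n) :
    ∃ M₀ : ℝ, 1 < M₀ ∧
      ∀ N : ℕ, 100 * M₀ < (N : ℝ) → ∀ c : ℝ, 0 < c →
      ∀ f : UnitAddCircle → ℝ, ContDiff ℝ (⊤ : ℕ∞) (fun t : ℝ => f (t : UnitAddCircle)) →
      ∀ ψ : ℝ → UnitAddCircle → ℝ,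
        (∀ ε : ℝ, 0 < ε → ε < 1 →
          Integrable (ψ ε) hm ∧
          fc (ψ ε) 0 = 1 ∧
          (∀ n : ℤ, n ≠ 0 →
            ‖fc (ψ ε) n‖ ≤ min ε (c * ε ^ (1 - (N : ℝ)) * (n.natAbs : ℝ) ^ (-(N : ℝ)))) ∧
          Summable (fun n : ℤ => if n = 0 then 0 else ‖fc (ψ ε) n‖ ^ 2 * lam n.natAbs) ∧
          (∑' n : ℤ, if n = 0 then 0 else ‖fc (ψ ε) n‖ ^ 2 * lam n.natAbs) ≤ ε ^ 2) →
        Tendsto (fun ε : ℝ => ∑' n : ℤ,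
            ENNReal.ofReal (‖fc (fun x => f x * ψ ε x) n - fc f n‖ ^ 2 * lam n.natAbs))
          (𝓝[>] (0 : ℝ)) (𝓝 0) := by
  obtain ⟨A, K, hK0, hK⟩ := aux_peetre lam hlam hdbl
  refine ⟨2, by norm_num, ?_⟩
  intro N _ c _ f hf ψ hψ
  have hsA := aux_summable f hf A
  have hs0 : Summable (fun m : ℤ => ‖fc f m‖) := by simpa using aux_summable f hf 0
  have hsv : Summable (fun m : ℤ => ‖fc f m‖ * (K * (1 + (m.natAbs : ℝ)) ^ A)) := by
    refine (hsA.mul_left K).congr fun m => ?_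
    ring
  set S1 : ℝ := ∑' m : ℤ, ‖fc f m‖
  set S2 : ℝ := ∑' m : ℤ, ‖fc f m‖ * (K * (1 + (m.natAbs : ℝ)) ^ A)
  have bound : ∀ ε : ℝ, 0 < ε → ε < 1 →
      ∑' n : ℤ, ENNReal.ofReal (‖fc (fun x => f x * ψ ε x) n - fc f n‖ ^ 2 * lam n.natAbs)
        ≤ ENNReal.ofReal (S1 * S2 * ε ^ 2) := by
    intro ε h0 h1
    obtain ⟨hint, hz, -, hsum, hle⟩ := hψ ε h0 h1
    set β : ℤ → ℝ := fun k => if k = 0 then 0 else ‖fc (ψ ε) k‖ with hβ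
    have hβ0 : ∀ k, 0 ≤ β k := by intro k; simp only [hβ]; split_ifs <;> simp
    have hS1 : ∑' m : ℤ, ENNReal.ofReal ‖fc f m‖ = ENNReal.ofReal S1 :=
      (ENNReal.ofReal_tsum_of_nonneg (fun _ => norm_nonneg _) hs0).symm
    have hS2 : ∑' m : ℤ, ENNReal.ofReal ‖fc f m‖ *
        ENNReal.ofReal (K * (1 + (m.natAbs : ℝ)) ^ A) = ENNReal.ofReal S2 := by
      rw [ENNReal.ofReal_tsum_of_nonneg (fun _ => by positivity) hsv]
      congr 1; funext m
      rw [ENNReal.ofReal_mul (norm_nonneg _)]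
    have hS3 : ∑' k : ℤ, ENNReal.ofReal (β k) ^ 2 * ENNReal.ofReal (lam k.natAbs)
        ≤ ENNReal.ofReal (ε ^ 2) := by
      refine le_trans (le_of_eq ?_) (ENNReal.ofReal_le_ofReal hle)
      rw [ENNReal.ofReal_tsum_of_nonneg ?_ hsum]
      · congr 1; funext k
        rw [← ENNReal.ofReal_pow (hβ0 k), ← ENNReal.ofReal_mul (by positivity)]
        congr 1
        simp only [hβ]
        split_ifs <;> simp
      · intro k
        have := hlam k.natAbs
        split_ifs
        · exact le_rfl
        · positivity
    have hY := aux_young (fun m => ENNReal.ofReal ‖fc f m‖) (fun k => ENNReal.ofReal (β k))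
      (fun n => ENNReal.ofReal (lam n.natAbs))
      (fun m => ENNReal.ofReal (K * (1 + (m.natAbs : ℝ)) ^ A)) (by simp [hβ]) (by
        intro n k hk
        rw [← ENNReal.ofReal_mul (by positivity)]
        exact ENNReal.ofReal_le_ofReal (hK n k hk))
    refine le_trans (ENNReal.tsum_le_tsum fun n => ?_) (hY.trans ?_)
    · rw [ENNReal.ofReal_mul (by positivity), ENNReal.ofReal_pow (norm_nonneg _)]
      gcongr
      have hc := aux_conv f (ψ ε) hf hs0 hint n
      have hc2 : HasSum (fun k : ℤ => fc f (n - k) * fc (ψ ε) k)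
          (fc (fun x => f x * ψ ε x) n) := by
        have := (Equiv.subLeft n).hasSum_iff.2 hc
        refine this.congr_fun ?_ |> id
        intro k
        simp
      have hc3 := hc2.sub (hasSum_ite_eq (0:ℤ) (fc f n))
      have hd : ∀ k : ℤ, ‖fc f (n - k) * fc (ψ ε) k - (if k = 0 then fc f n else 0)‖ₑ
          = ENNReal.ofReal ‖fc f (n - k)‖ * ENNReal.ofReal (β k) := by
        intro k
        by_cases hk : k = 0
        · subst hk; simp [hβ, hz]
        · simp [hβ, hk]
      rw [ofReal_norm, ← hc3.tsum_eq]
      refine enorm_tsum_le_tsum_enorm.trans (le_of_eq ?_)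
      exact tsum_congr hd
    · rw [hS1, hS2]
      have p1 : 0 ≤ S1 := tsum_nonneg fun _ => norm_nonneg _
      have p2 : 0 ≤ S2 := tsum_nonneg fun _ => by positivity
      rw [ENNReal.ofReal_mul (by positivity), ENNReal.ofReal_mul p1]
      gcongr
  have hlim : Tendsto (fun ε : ℝ => ENNReal.ofReal (S1 * S2 * ε ^ 2)) (𝓝[>] (0 : ℝ)) (𝓝 0) := by
    have : Continuous (fun ε : ℝ => ENNReal.ofReal (S1 * S2 * ε ^ 2)) :=
      ENNReal.continuous_ofReal.comp (by fun_prop)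
    have h := this.tendsto 0
    simp only [ne_eq, OfNat.ofNat_ne_zero, not_false_eq_true, zero_pow, mul_zero,
      ENNReal.ofReal_zero] at h
    exact h.mono_left nhdsWithin_le_nhds
  refine tendsto_of_tendsto_of_tendsto_of_le_of_le' tendsto_const_nhds hlim
    (Eventually.of_forall fun _ => zero_le) ?_
  filter_upwards [Ioo_mem_nhdsGT (show (0:ℝ) < 1 by norm_num)] with ε hε
  exact bound ε hε.1 hε.2
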